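/- arXiv:1607.03821 — 2 statements merged into one kernel-verified Lean document; each statement's English description precedes it below -/
import Mathlib

section
/- For every n ≥ 2 and m ≥ 2, there is no deterministic mechanism (f, p) for n value bidders and m identical units that is simultaneously individually rational, truthful for value bidders, and revenue maximizing (its revenue Σ_i p_i(v) equals the optimal revenue on every profile of valuations). -/
/-- A multi-unit valuation: `v 0 = 0`, monotone nondecreasing, nonnegative. -/
def MUValuation (v : ℕ → ℝ) : Prop := v 0 = 0 ∧ Monotone v ∧ ∀ s, 0 ≤ v s

/-- The optimal revenue of a profile in the `n × m` multi-unit market: the maximum over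
allocations `(s₁,…,sₙ)` with `∑ sᵢ ≤ m` of `∑ vᵢ(sᵢ)`. -/
noncomputable def optRevMU (n m : ℕ) (v : Fin n → ℕ → ℝ) : ℝ :=
  sSup {x : ℝ | ∃ s : Fin n → ℕ, (∑ i, s i) ≤ m ∧ x = ∑ i, v i (s i)}

/-!
Individual rationality and revenue maximization force the allocation to be efficient, so the
payments drop out: a bid below the true value never produces a price above the true value, hence
truthfulness says that underbidding never wins a more valuable bundle. Let one bidder want a single
unit at value `2` or all `m` units at value `3`, and another want a single unit at value `2`.
Efficiency splits the units between them, for a total of `4`. If the first bidder hides the interest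
in a single unit, efficiency instead gives them all `m` units, since `3 > 2`.
-/

section Efficiency

variable {ι : Type*} [Fintype ι] {m : ℕ} {v : ι → ℕ → ℝ} {s : ι → ℕ}

/-- Efficiency: `s` allocates at most `m` units and maximizes the total value `∑ i, v i (s i)`
among such allocations. -/
structure IsEfficient (m : ℕ) (v : ι → ℕ → ℝ) (s : ι → ℕ) : Prop where
  sum_le : ∑ i, s i ≤ m
  sum_apply_le : ∀ t : ι → ℕ, ∑ i, t i ≤ m → ∑ i, v i (t i) ≤ ∑ i, v i (s i)

lemma IsEfficient.apply_le (h : IsEfficient m v s) (i : ι) : s i ≤ m :=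
  (Finset.single_le_sum_of_canonicallyOrdered (Finset.mem_univ i)).trans h.sum_le

lemma IsEfficient.add_apply_le (h : IsEfficient m v s) {i j : ι} (hij : i ≠ j) :
    s i + s j ≤ m :=
  (Finset.add_le_sum (fun _ _ => Nat.zero_le _) (Finset.mem_univ i) (Finset.mem_univ j) hij).trans
    h.sum_le

end Efficiency

section Revenue

variable {n m : ℕ} {v : Fin n → ℕ → ℝ} {s : Fin n → ℕ}

lemma sum_le_optRevMU (hv : ∀ i, Monotone (v i)) (hs : ∑ i, s i ≤ m) :
    ∑ i, v i (s i) ≤ optRevMU n m v := by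
  refine le_csSup ⟨∑ i, v i m, ?_⟩ ⟨s, hs, rfl⟩
  rintro _ ⟨t, ht, rfl⟩
  gcongr with i
  exact hv i ((Finset.single_le_sum_of_canonicallyOrdered (Finset.mem_univ i)).trans ht)

lemma isEfficient_of_optRevMU_le_sum (hv : ∀ i, Monotone (v i)) (hs : ∑ i, s i ≤ m)
    {p : Fin n → ℝ} (hp : ∀ i, p i ≤ v i (s i)) (hrev : optRevMU n m v ≤ ∑ i, p i) :
    IsEfficient m v s where
  sum_le := hs
  sum_apply_le t ht := calc
    ∑ i, v i (t i) ≤ optRevMU n m v := sum_le_optRevMU hv ht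
    _ ≤ ∑ i, p i := hrev
    _ ≤ ∑ i, v i (s i) := Finset.sum_le_sum fun i _ => hp i

end Revenue

section Valuations

lemma MUValuation.zero : MUValuation 0 :=
  ⟨rfl, monotone_const, fun _ => le_rfl⟩

lemma MUValuation.sup {a b : ℕ → ℝ} (ha : MUValuation a) (hb : MUValuation b) :
    MUValuation (a ⊔ b) :=
  ⟨by simp [ha.1, hb.1], ha.2.1.sup hb.2.1, fun s => le_sup_of_le_left (ha.2.2 s)⟩

/-- The valuation of a single-minded bidder, worth `c` from `q` units on and nothing below. For
`q = 0` even zero units are worth `c`, so `MUValuation` calls for `0 < q`. -/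
def thresholdValuation (q : ℕ) (c : ℝ) (s : ℕ) : ℝ :=
  if q ≤ s then c else 0

variable {q s : ℕ} {c : ℝ}

lemma thresholdValuation_of_le (h : q ≤ s) : thresholdValuation q c s = c :=
  if_pos h

lemma thresholdValuation_of_lt (h : s < q) : thresholdValuation q c s = 0 :=
  if_neg h.not_ge

lemma thresholdValuation_le (hc : 0 ≤ c) : thresholdValuation q c s ≤ c :=
  (ite_le_sup c 0 _).trans (sup_le le_rfl hc)

lemma muValuation_thresholdValuation (hq : 0 < q) (hc : 0 ≤ c) :
    MUValuation (thresholdValuation q c) := by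
  refine ⟨thresholdValuation_of_lt hq, fun s t hst => ?_, fun s => ?_⟩ <;>
    grind [thresholdValuation]

end Valuations

section TwoBidders

variable {ι : Type*} [DecidableEq ι] {i j : ι} {a b : ℕ → ℝ}

/-- The profile in which bidder `i` has valuation `a`, bidder `j` has valuation `b`, and every other
bidder has valuation zero. It is meant for `i ≠ j`; if `i = j`, the valuation `b` is discarded. -/
def twoBidderProfile (i j : ι) (a b : ℕ → ℝ) : ι → ℕ → ℝ :=
  Function.update (Pi.single j b) i a

@[simp]
lemma twoBidderProfile_left : twoBidderProfile i j a b i = a :=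
  Function.update_self ..

lemma update_twoBidderProfile (a' : ℕ → ℝ) :
    Function.update (twoBidderProfile i j a b) i a' = twoBidderProfile i j a' b :=
  Function.update_idem ..

lemma muValuation_twoBidderProfile (ha : MUValuation a) (hb : MUValuation b) (k : ι) :
    MUValuation (twoBidderProfile i j a b k) := by
  obtain rfl | hki := eq_or_ne k i
  · simpa
  obtain rfl | hkj := eq_or_ne k j
  · simpa [twoBidderProfile, hki]
  · simpa [twoBidderProfile, hki, hkj] using MUValuation.zero

variable [Fintype ι] {m : ℕ} {s : ι → ℕ}

lemma sum_twoBidderProfile (hij : i ≠ j) (t : ι → ℕ) :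
    ∑ k, twoBidderProfile i j a b k (t k) = a (t i) + b (t j) := by
  rw [Fintype.sum_eq_add i j hij]
  · simp [twoBidderProfile, hij.symm]
  · rintro k ⟨hki, hkj⟩
    simp [twoBidderProfile, hki, hkj]

namespace IsEfficient

lemma add_le_add_of_twoBidderProfile (h : IsEfficient m (twoBidderProfile i j a b) s) (hij : i ≠ j)
    {x y : ℕ} (hxy : x + y ≤ m) : a x + b y ≤ a (s i) + b (s j) := by
  have hsum : ∑ k, (Pi.single i x + Pi.single j y : ι → ℕ) k ≤ m := by
    simpa [Finset.sum_add_distrib] using hxy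
  have hle := h.sum_apply_le _ hsum
  simpa only [sum_twoBidderProfile hij, Pi.add_apply, Pi.single_eq_same, Pi.single_eq_of_ne hij,
    Pi.single_eq_of_ne hij.symm, add_zero, zero_add] using hle

lemma apply_lt_of_lt_add (h : IsEfficient m (twoBidderProfile i j a b) s) (hij : i ≠ j)
    (hb : b 0 = 0) {x y : ℕ} (hxy : x + y ≤ m) (hlt : a m < a x + b y) : s i < m := by
  by_contra! hm
  have hadd := h.add_apply_le hij
  have hsi : s i = m := by lia
  have hsj : s j = 0 := by lia
  have hle := h.add_le_add_of_twoBidderProfile hij hxy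
  rw [hsi, hsj, hb, add_zero] at hle
  exact hle.not_gt hlt

lemma le_apply_of_lt {q : ℕ} {c : ℝ}
    (h : IsEfficient m (twoBidderProfile i j (thresholdValuation q c) b) s) (hij : i ≠ j)
    (hb : MUValuation b) (hq : q ≤ m) (hlt : b m < c) : q ≤ s i := by
  by_contra! hlose
  have hle := h.add_le_add_of_twoBidderProfile hij (x := q) (y := 0) hq
  rw [thresholdValuation_of_le le_rfl, thresholdValuation_of_lt hlose, hb.1, add_zero,
    zero_add] at hle
  exact (hle.trans (hb.2.1 (h.apply_le j))).not_gt hlt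

end IsEfficient

end TwoBidders

lemma payment_underbid_le {ι : Type*} [DecidableEq ι] {f : (ι → ℕ → ℝ) → ι → ℕ}
    {p : (ι → ℕ → ℝ) → ι → ℝ}
    (hir : ∀ v, (∀ i, MUValuation (v i)) → ∀ i, p v i ≤ v i (f v i))
    {v : ι → ℕ → ℝ} (hv : ∀ i, MUValuation (v i)) {i : ι} {v' : ℕ → ℝ} (hv' : MUValuation v')
    (hle : v' ≤ v i) :
    p (Function.update v i v') i ≤ v i (f (Function.update v i v') i) := by
  have hupdate : ∀ k, MUValuation (Function.update v i v' k) :=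
    (Function.forall_update_iff v fun _ => MUValuation).2 ⟨hv', fun k _ => hv k⟩
  have hpay := hir _ hupdate i
  rw [Function.update_self] at hpay
  exact hpay.trans (hle _)

theorem no_truthful_revenue_maximizing_multiunit_general {ι : Type*} [Fintype ι] [DecidableEq ι]
    [Nontrivial ι] {m : ℕ} (hm : 2 ≤ m) :
    ¬ ∃ f : (ι → ℕ → ℝ) → ι → ℕ,
      (∀ v : ι → ℕ → ℝ, (∀ i, MUValuation (v i)) → IsEfficient m v (f v)) ∧
      (∀ v : ι → ℕ → ℝ, (∀ i, MUValuation (v i)) → ∀ (i : ι) (v' : ℕ → ℝ), MUValuation v' →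
        v' ≤ v i → v i (f (Function.update v i v') i) ≤ v i (f v i)) := by
  rintro ⟨f, hf, hunder⟩
  obtain ⟨i, j, hij⟩ := exists_pair_ne ι
  let unit := thresholdValuation 1 2
  let bundle := thresholdValuation m 3
  have hunit : MUValuation unit := muValuation_thresholdValuation one_pos zero_le_two
  have hbundle : MUValuation bundle := muValuation_thresholdValuation (by lia) zero_le_three
  have hv := muValuation_twoBidderProfile (i := i) (j := j) (hunit.sup hbundle) hunit
  have hunit_one : unit 1 = 2 := thresholdValuation_of_le le_rfl
  have hunit_m : unit m = 2 := thresholdValuation_of_le (by lia)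
  have hbundle_m : bundle m = 3 := thresholdValuation_of_le le_rfl
  have hsplit : f (twoBidderProfile i j (unit ⊔ bundle) unit) i < m := by
    refine (hf _ hv).apply_lt_of_lt_add hij hunit.1 (x := 1) (y := 1) hm ?_
    have hmax : (unit ⊔ bundle) m = 3 := by norm_num [hunit_m, hbundle_m]
    have hone : 2 ≤ (unit ⊔ bundle) 1 := hunit_one.ge.trans le_sup_left
    linarith
  have hwin : m ≤ f (twoBidderProfile i j bundle unit) i :=
    (hf _ (muValuation_twoBidderProfile hbundle hunit)).le_apply_of_lt hij hunit le_rfl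
      (by norm_num [hunit_m])
  have hle := hunder _ hv i bundle hbundle (by simp)
  rw [update_twoBidderProfile, twoBidderProfile_left] at hle
  refine hle.not_gt (lt_of_lt_of_le (b := 3) ?_ ?_)
  · exact max_lt ((thresholdValuation_le zero_le_two).trans_lt (by norm_num))
      (by norm_num [bundle, thresholdValuation_of_lt hsplit])
  · exact (thresholdValuation_of_le hwin).ge.trans le_sup_right

/-- for `n ≥ 2` and `m ≥ 2`, there is no deterministic mechanism for `n`
value bidders and `m` identical units that is individually rational, truthful for value
bidders, and revenue maximizing. -/
theorem no_truthful_revenue_maximizing_multiunit (n m : ℕ) (hn : 2 ≤ n) (hm : 2 ≤ m) :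
    ¬ ∃ (f : (Fin n → ℕ → ℝ) → Fin n → ℕ) (p : (Fin n → ℕ → ℝ) → Fin n → ℝ),
      (∀ v, (∀ i, MUValuation (v i)) → (∑ i, f v i) ≤ m) ∧
      (∀ v, (∀ i, MUValuation (v i)) → ∀ i, p v i ≤ v i (f v i)) ∧
      (∀ v, (∀ i, MUValuation (v i)) → ∀ (i : Fin n) (v' : ℕ → ℝ), MUValuation v' →
        (p (Function.update v i v') i ≤ v i (f (Function.update v i v') i) →
          v i (f (Function.update v i v') i) ≤ v i (f v i))) ∧
      (∀ v, (∀ i, MUValuation (v i)) → (∑ i, p v i) = optRevMU n m v) := by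
  rintro ⟨f, p, hfeas, hir, htruth, hrev⟩
  have : Nontrivial (Fin n) := Fin.nontrivial_iff_two_le.2 hn
  exact no_truthful_revenue_maximizing_multiunit_general hm ⟨f,
    fun v hv => isEfficient_of_optRevMU_le_sum (fun i => (hv i).2.1) (hfeas v hv) (hir v hv)
      (hrev v hv).ge,
    fun v hv i v' hv' hle => htruth v hv i v' hv' (payment_underbid_le hir hv hv' hle)⟩
end

section
/- For every ε > 0 and every deterministic mechanism (f, p) for 2 bidders and 3 identical units, defined on the domain of profiles with v_1(3) > v_2(3) (bidder 1 is the public strongest bidder), that is individually rational and truthful for value bidders, there exists a profile v in the domain for which the revenue Σ_i p_i(v) is strictly less than (1/2 + ε) times the optimal revenue. -/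
/-- Optimal revenue with two bidders and `m` identical units: the maximum over
allocations `(s₁, s₂)` with `s₁ + s₂ ≤ m` of `v₁(s₁) + v₂(s₂)`. -/
noncomputable def optRevTwo (m : ℕ) (v₁ v₂ : ℕ → ℝ) : ℝ :=
  sSup {x : ℝ | ∃ s₁ s₂ : ℕ, s₁ + s₂ ≤ m ∧ x = v₁ s₁ + v₂ s₂}

/-!
Truthfulness and individual rationality yield a payment-free monotonicity: a bidder gets at least
the value of whatever she could have obtained by a misreport that does not overstate its worth.
Let both bidders want `m - 1` units and nothing less, so that at most one of them can be served. If
the mechanism serves one of them, let her raise her value for a single unit to almost her full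
value. By monotonicity she still gets her full value, hence still at least `m - 1` units, and the
other bidder is not served; but one unit for her and `m - 1` for the other is now worth almost twice
as much. So a mechanism with ratio above one half serves neither bidder, and its welfare is zero.
-/

lemma le_optRevTwo {m s₁ s₂ : ℕ} {v₁ v₂ : ℕ → ℝ} (h₁ : Monotone v₁) (h₂ : Monotone v₂)
    (hs : s₁ + s₂ ≤ m) : v₁ s₁ + v₂ s₂ ≤ optRevTwo m v₁ v₂ := by
  refine le_csSup ⟨v₁ m + v₂ m, ?_⟩ ⟨s₁, s₂, hs, rfl⟩
  rintro x ⟨t₁, t₂, ht, rfl⟩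
  exact add_le_add (h₁ (by omega)) (h₂ (by omega))

lemma optRevTwo_comm (m : ℕ) (v₁ v₂ : ℕ → ℝ) : optRevTwo m v₁ v₂ = optRevTwo m v₂ v₁ := by
  unfold optRevTwo
  congr 1
  ext x
  constructor <;> rintro ⟨s, t, hst, rfl⟩ <;> exact ⟨t, s, by omega, add_comm _ _⟩

/-- The valuation of a bidder with value `a` for a nonempty bundle of fewer than `k` units and
value `b` for `k` or more units. -/
noncomputable def twoLevel (k : ℕ) (a b : ℝ) (s : ℕ) : ℝ :=
  if s = 0 then 0 else if s < k then a else b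

section TwoLevel

variable {k s t m : ℕ} {a b c d ρ : ℝ}

lemma twoLevel_of_pos_of_lt (hs : 0 < s) (hsk : s < k) : twoLevel k a b s = a := by
  rw [twoLevel, if_neg hs.ne', if_pos hsk]

lemma twoLevel_of_le (hk : 0 < k) (hks : k ≤ s) : twoLevel k a b s = b := by
  rw [twoLevel, if_neg (hk.trans_le hks).ne', if_neg hks.not_gt]

lemma twoLevel_le_of_lt (ha : 0 ≤ a) (hsk : s < k) : twoLevel k a b s ≤ a := by
  rw [twoLevel, if_pos hsk]
  split_ifs
  exacts [ha, le_rfl]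

lemma muValuation_twoLevel (ha : 0 ≤ a) (hab : a ≤ b) : MUValuation (twoLevel k a b) := by
  have hmono : Monotone (twoLevel k a b) := by
    intro s t hst
    unfold twoLevel
    split_ifs <;> first | omega | linarith
  exact ⟨if_pos rfl, hmono, fun s => hmono (Nat.zero_le s)⟩

lemma low_add_high_le_optRevTwo (hk : 1 < k) (hkm : k < m) (ha : 0 ≤ a) (hab : a ≤ b)
    (hc : 0 ≤ c) (hcd : c ≤ d) :
    a + d ≤ optRevTwo m (twoLevel k a b) (twoLevel k c d) := by
  have h := le_optRevTwo (muValuation_twoLevel (k := k) ha hab).2.1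
    (muValuation_twoLevel (k := k) hc hcd).2.1 (show 1 + k ≤ m by omega)
  rwa [twoLevel_of_pos_of_lt one_pos hk, twoLevel_of_le (by omega) le_rfl] at h

lemma fst_lt_of_ratio_le_welfare (hkm : k < m) (hmk : m < 2 * k) (hst : s + t ≤ m)
    (ha : 0 ≤ a) (hab : a ≤ b) (hd : 0 ≤ d) (hb : b < ρ * (a + d))
    (hratio : ρ * optRevTwo m (twoLevel k a b) (twoLevel k 0 d) ≤
      twoLevel k a b s + twoLevel k 0 d t) : s < k := by
  have hρ : 0 < ρ := pos_of_mul_pos_left ((ha.trans hab).trans_lt hb) (add_nonneg ha hd)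
  by_contra! hks
  have ht : twoLevel k 0 d t ≤ 0 := twoLevel_le_of_lt le_rfl (by omega)
  refine hb.not_ge ?_
  calc ρ * (a + d)
      ≤ ρ * optRevTwo m (twoLevel k a b) (twoLevel k 0 d) :=
        mul_le_mul_of_nonneg_left
          (low_add_high_le_optRevTwo (by omega) hkm ha hab le_rfl hd) hρ.le
    _ ≤ twoLevel k a b s + twoLevel k 0 d t := hratio
    _ = b + twoLevel k 0 d t := by rw [twoLevel_of_le (by omega) hks]
    _ ≤ b := by linarith

lemma snd_lt_of_ratio_le_welfare (hkm : k < m) (hmk : m < 2 * k) (hst : s + t ≤ m)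
    (ha : 0 ≤ a) (hab : a ≤ b) (hd : 0 ≤ d) (hb : b < ρ * (a + d))
    (hratio : ρ * optRevTwo m (twoLevel k 0 d) (twoLevel k a b) ≤
      twoLevel k 0 d s + twoLevel k a b t) : t < k := by
  rw [optRevTwo_comm, add_comm (twoLevel k 0 d s)] at hratio
  exact fst_lt_of_ratio_le_welfare hkm hmk (by omega) ha hab hd hb hratio

end TwoLevel

/-- Monotonicity of the rule `g` that assigns to each report of one bidder, the other reports being
fixed, her number of units: on `D`, if the allocation of report `w` is worth at least as much under
`v` as under `w`, then reporting `v` yields at least that value under `v`. This is the payment-free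
consequence of individual rationality and truthfulness for value bidders. -/
def ValueMonotoneOn (D : Set (ℕ → ℝ)) (g : (ℕ → ℝ) → ℕ) : Prop :=
  ∀ v ∈ D, ∀ w ∈ D, w (g w) ≤ v (g w) → v (g w) ≤ v (g v)

section ValueMonotoneOn

variable {D : Set (ℕ → ℝ)} {g : (ℕ → ℝ) → ℕ}

lemma valueMonotoneOn_of_truthful {q : (ℕ → ℝ) → ℝ} (hIR : ∀ w ∈ D, q w ≤ w (g w))
    (htruth : ∀ v ∈ D, ∀ w ∈ D, q w ≤ v (g w) → v (g w) ≤ v (g v)) : ValueMonotoneOn D g :=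
  fun v hv w hw h => htruth v hv w hw ((hIR w hw).trans h)

lemma ValueMonotoneOn.lt_of_twoLevel_lt {k : ℕ} {a a' b : ℝ} (hg : ValueMonotoneOn D g)
    (hk : 0 < k) (ha : 0 ≤ a) (hab : a < b) (hD : twoLevel k a b ∈ D) (hD' : twoLevel k a' b ∈ D)
    (hlt : g (twoLevel k a b) < k) : g (twoLevel k a' b) < k := by
  by_contra! hle
  have hgain := hg _ hD _ hD'
  rw [twoLevel_of_le hk hle, twoLevel_of_le hk hle] at hgain
  exact hab.not_ge ((hgain le_rfl).trans (twoLevel_le_of_lt ha hlt))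

end ValueMonotoneOn

theorem exists_welfare_lt_of_valueMonotoneOn {m : ℕ} (hm : 3 ≤ m) {ε : ℝ} (hε : 0 < ε)
    {f : (ℕ → ℝ) → (ℕ → ℝ) → ℕ × ℕ}
    (hfeas : ∀ v₁ v₂, MUValuation v₁ → MUValuation v₂ → v₂ m < v₁ m →
      (f v₁ v₂).1 + (f v₁ v₂).2 ≤ m)
    (hmono₁ : ∀ v₂, MUValuation v₂ →
      ValueMonotoneOn {v₁ | MUValuation v₁ ∧ v₂ m < v₁ m} fun v₁ => (f v₁ v₂).1)
    (hmono₂ : ∀ v₁, MUValuation v₁ →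
      ValueMonotoneOn {v₂ | MUValuation v₂ ∧ v₂ m < v₁ m} fun v₂ => (f v₁ v₂).2) :
    ∃ v₁ v₂ : ℕ → ℝ, MUValuation v₁ ∧ MUValuation v₂ ∧ v₂ m < v₁ m ∧
      v₁ (f v₁ v₂).1 + v₂ (f v₁ v₂).2 < (1 / 2 + ε) * optRevTwo m v₁ v₂ := by
  by_contra! hratio
  obtain ⟨k, hk, hkm, hmk⟩ : ∃ k, 1 < k ∧ k < m ∧ m < 2 * k :=
    ⟨m - 1, by omega, by omega, by omega⟩
  -- The high levels are `1 + δ` and `1`, and a bidder's low level is raised to her high level minus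
  -- `δ`. Then the optimum is at least `2`, whereas serving only the raised bidder yields at most
  -- `1 + δ < (1 / 2 + ε) * 2`.
  obtain ⟨δ, hδ, hδε, hδ1⟩ : ∃ δ : ℝ, 0 < δ ∧ δ ≤ ε ∧ δ ≤ 1 :=
    ⟨min ε 1, lt_min hε one_pos, min_le_left _ _, min_le_right _ _⟩
  have hk0 : 0 < k := by omega
  have hlt (a₁ a₂ : ℝ) : twoLevel k a₂ 1 m < twoLevel k a₁ (1 + δ) m := by
    rw [twoLevel_of_le hk0 hkm.le, twoLevel_of_le hk0 hkm.le]
    linarith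
  have hstrong : MUValuation (twoLevel k 0 (1 + δ)) := muValuation_twoLevel le_rfl (by linarith)
  have hstrong' : MUValuation (twoLevel k 1 (1 + δ)) :=
    muValuation_twoLevel zero_le_one (by linarith)
  have hweak : MUValuation (twoLevel k 0 1) := muValuation_twoLevel le_rfl zero_le_one
  have hweak' : MUValuation (twoLevel k (1 - δ) 1) :=
    muValuation_twoLevel (by linarith) (by linarith)
  have strong_raised_lt : (f (twoLevel k 1 (1 + δ)) (twoLevel k 0 1)).1 < k :=
    fst_lt_of_ratio_le_welfare hkm hmk (hfeas _ _ hstrong' hweak (hlt _ _)) zero_le_one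
      (by linarith) zero_le_one (by linarith) (hratio _ _ hstrong' hweak (hlt _ _))
  have weak_raised_lt : (f (twoLevel k 0 (1 + δ)) (twoLevel k (1 - δ) 1)).2 < k :=
    snd_lt_of_ratio_le_welfare hkm hmk (hfeas _ _ hstrong hweak' (hlt _ _)) (by linarith)
      (by linarith) (by linarith) (by linarith) (hratio _ _ hstrong hweak' (hlt _ _))
  have strong_lt : (f (twoLevel k 0 (1 + δ)) (twoLevel k 0 1)).1 < k :=
    (hmono₁ _ hweak).lt_of_twoLevel_lt hk0 zero_le_one (by linarith) ⟨hstrong', hlt _ _⟩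
      ⟨hstrong, hlt _ _⟩ strong_raised_lt
  have weak_lt : (f (twoLevel k 0 (1 + δ)) (twoLevel k 0 1)).2 < k :=
    (hmono₂ _ hstrong).lt_of_twoLevel_lt hk0 (by linarith) (by linarith) ⟨hweak', hlt _ _⟩
      ⟨hweak, hlt _ _⟩ weak_raised_lt
  have hopt : 0 + 1 ≤ optRevTwo m (twoLevel k 0 (1 + δ)) (twoLevel k 0 1) :=
    low_add_high_le_optRevTwo hk hkm le_rfl (by linarith) le_rfl zero_le_one
  refine (hratio _ _ hstrong hweak (hlt _ _)).not_gt ?_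
  calc twoLevel k 0 (1 + δ) _ + twoLevel k 0 1 _
      ≤ 0 := add_nonpos (twoLevel_le_of_lt le_rfl strong_lt) (twoLevel_le_of_lt le_rfl weak_lt)
    _ < (1 / 2 + ε) * optRevTwo m (twoLevel k 0 (1 + δ)) (twoLevel k 0 1) :=
      mul_pos (by linarith) (by linarith)

theorem no_truthful_2x3_mechanism_beats_one_half_general
    {m : ℕ} (hm : 3 ≤ m) {ε : ℝ} (hε : 0 < ε)
    {f : (ℕ → ℝ) → (ℕ → ℝ) → ℕ × ℕ} {p : (ℕ → ℝ) → (ℕ → ℝ) → ℝ × ℝ}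
    (hfeas : ∀ v₁ v₂, MUValuation v₁ → MUValuation v₂ → v₂ m < v₁ m →
      (f v₁ v₂).1 + (f v₁ v₂).2 ≤ m)
    (hIR : ∀ v₁ v₂, MUValuation v₁ → MUValuation v₂ → v₂ m < v₁ m →
      (p v₁ v₂).1 ≤ v₁ (f v₁ v₂).1 ∧ (p v₁ v₂).2 ≤ v₂ (f v₁ v₂).2)
    (htruth₁ : ∀ v₁ v₂ v₁', MUValuation v₁ → MUValuation v₂ → MUValuation v₁' →
      v₂ m < v₁ m → v₂ m < v₁' m →
      ((p v₁' v₂).1 ≤ v₁ (f v₁' v₂).1 → v₁ (f v₁' v₂).1 ≤ v₁ (f v₁ v₂).1))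
    (htruth₂ : ∀ v₁ v₂ v₂', MUValuation v₁ → MUValuation v₂ → MUValuation v₂' →
      v₂ m < v₁ m → v₂' m < v₁ m →
      ((p v₁ v₂').2 ≤ v₂ (f v₁ v₂').2 → v₂ (f v₁ v₂').2 ≤ v₂ (f v₁ v₂).2)) :
    ∃ v₁ v₂ : ℕ → ℝ, MUValuation v₁ ∧ MUValuation v₂ ∧ v₂ m < v₁ m ∧
      (p v₁ v₂).1 + (p v₁ v₂).2 < (1 / 2 + ε) * optRevTwo m v₁ v₂ := by
  obtain ⟨v₁, v₂, h₁, h₂, hlt, hwelfare⟩ :=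
    exists_welfare_lt_of_valueMonotoneOn hm hε hfeas
      (fun v₂ h₂ => valueMonotoneOn_of_truthful (fun w hw => (hIR w v₂ hw.1 h₂ hw.2).1)
        fun v hv w hw => htruth₁ v v₂ w hv.1 h₂ hw.1 hv.2 hw.2)
      (fun v₁ h₁ => valueMonotoneOn_of_truthful (fun w hw => (hIR v₁ w h₁ hw.1 hw.2).2)
        fun v hv w hw => htruth₂ v₁ v w h₁ hv.1 hw.1 hv.2 hw.2)
  obtain ⟨hp₁, hp₂⟩ := hIR v₁ v₂ h₁ h₂ hlt
  exact ⟨v₁, v₂, h₁, h₂, hlt, (add_le_add hp₁ hp₂).trans_lt hwelfare⟩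

/-- for every `ε > 0`, every deterministic, individually rational
mechanism for 2 bidders and 3 identical units on the domain `v₁(3) > v₂(3)` (bidder 1
is the public strongest bidder) that is truthful for value bidders has a profile in the
domain on which its revenue is less than `(1/2 + ε)` times the optimal revenue. -/
theorem no_truthful_2x3_mechanism_beats_one_half
    (ε : ℝ) (hε : 0 < ε)
    (f : (ℕ → ℝ) → (ℕ → ℝ) → ℕ × ℕ) (p : (ℕ → ℝ) → (ℕ → ℝ) → ℝ × ℝ)
    (hfeas : ∀ v₁ v₂, MUValuation v₁ → MUValuation v₂ → v₂ 3 < v₁ 3 →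
      (f v₁ v₂).1 + (f v₁ v₂).2 ≤ 3)
    (hIR : ∀ v₁ v₂, MUValuation v₁ → MUValuation v₂ → v₂ 3 < v₁ 3 →
      (p v₁ v₂).1 ≤ v₁ (f v₁ v₂).1 ∧ (p v₁ v₂).2 ≤ v₂ (f v₁ v₂).2)
    (htruth₁ : ∀ v₁ v₂ v₁', MUValuation v₁ → MUValuation v₂ → MUValuation v₁' →
      v₂ 3 < v₁ 3 → v₂ 3 < v₁' 3 →
      ((p v₁' v₂).1 ≤ v₁ (f v₁' v₂).1 → v₁ (f v₁' v₂).1 ≤ v₁ (f v₁ v₂).1))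
    (htruth₂ : ∀ v₁ v₂ v₂', MUValuation v₁ → MUValuation v₂ → MUValuation v₂' →
      v₂ 3 < v₁ 3 → v₂' 3 < v₁ 3 →
      ((p v₁ v₂').2 ≤ v₂ (f v₁ v₂').2 → v₂ (f v₁ v₂').2 ≤ v₂ (f v₁ v₂).2)) :
    ∃ v₁ v₂ : ℕ → ℝ, MUValuation v₁ ∧ MUValuation v₂ ∧ v₂ 3 < v₁ 3 ∧
      (p v₁ v₂).1 + (p v₁ v₂).2 < (1 / 2 + ε) * optRevTwo 3 v₁ v₂ :=
  no_truthful_2x3_mechanism_beats_one_half_general le_rfl hε hfeas hIR htruth₁ htruth₂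
end
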